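/- arXiv:2412.11173 — 4 statements merged into one kernel-verified Lean document; each statement's English description precedes it below -/
import Mathlib

section
/- Let p be an odd prime and let P be a finite p-group possessing a characteristic cyclic subgroup C such that the centralizer of C in P satisfies C_P(C) ≤ C. Then the automorphism group Aut(P) has a normal Sylow p-subgroup. -/
namespace MulAut

variable {G : Type*} [Group G]

/-- An automorphism fixing `C` pointwise multiplies each element by an element of the
centralizer of a normal subgroup `C`. -/
theorem inv_mul_apply_mem_centralizer {C : Subgroup G} [C.Normal] {f : MulAut G}
    (hf : ∀ c ∈ C, f c = c) (x : G) :
    x⁻¹ * f x ∈ Subgroup.centralizer (C : Set G) := by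
  rw [Subgroup.mem_centralizer_iff]
  intro c hc
  have h : f x * c * (f x)⁻¹ = x * c * x⁻¹ := by
    have := hf _ (Subgroup.Normal.conj_mem ‹_› c hc x)
    rwa [map_mul, map_mul, map_inv, hf c hc] at this
  have h' : f x * c = x * c * x⁻¹ * f x := by rw [← h]; group
  simp only [mul_assoc] at h' ⊢
  rw [h']
  group

theorem pow_apply_of_inv_mul_apply_mem {C : Subgroup G} {f : MulAut G}
    (hf : ∀ c ∈ C, f c = c) {x : G} (hx : x⁻¹ * f x ∈ C) (n : ℕ) :
    (f ^ n) x = x * (x⁻¹ * f x) ^ n := by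
  induction n with
  | zero => simp
  | succ n ih =>
    rw [pow_succ', mul_apply, ih, map_mul, hf _ (pow_mem hx n), pow_succ', ← mul_assoc,
      mul_inv_cancel_left]

theorem pow_card_eq_one_of_fixes {C : Subgroup G} [C.Normal]
    (hC : Subgroup.centralizer (C : Set G) ≤ C) {f : MulAut G} (hf : ∀ c ∈ C, f c = c) :
    f ^ Nat.card C = 1 := by
  ext x
  have hx := hC (inv_mul_apply_mem_centralizer hf x)
  rw [pow_apply_of_inv_mul_apply_mem hf hx, orderOf_dvd_iff_pow_eq_one.mp (Subgroup.orderOf_dvd_natCard C hx)]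
  simp

/-- Automorphisms commute on a characteristic cyclic subgroup. -/
theorem apply_apply_comm_of_mem {C : Subgroup G} [hchar : C.Characteristic] [hcyc : IsCyclic C]
    (f g : MulAut G) {c : G} (hc : c ∈ C) : f (g c) = g (f c) := by
  obtain ⟨a, rfl⟩ := (Subgroup.isCyclic_iff_exists_zpowers_eq_top C).mp hcyc
  have key (h : MulAut G) : ∃ m : ℤ, a ^ m = h a :=
    Subgroup.mem_zpowers_iff.mp <|
      Subgroup.characteristic_iff_map_le.mp hchar h
        (Subgroup.mem_map_of_mem _ (Subgroup.mem_zpowers a))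
  obtain ⟨k, rfl⟩ := Subgroup.mem_zpowers_iff.mp hc
  obtain ⟨m, hm⟩ := key f
  obtain ⟨n, hn⟩ := key g
  simp only [map_zpow, ← hm, ← hn, ← zpow_mul]
  congr 1
  ring

theorem apply_eq_of_mem_commutator {C : Subgroup G} [C.Characteristic] [IsCyclic C]
    {f : MulAut G} (hf : f ∈ commutator (MulAut G)) {c : G} (hc : c ∈ C) : f c = c := by
  have hle : commutator (MulAut G) ≤ fixingSubgroup (MulAut G) (C : Set G) := by
    refine Subgroup.commutator_le.mpr fun g _ h _ => ?_
    rw [mem_fixingSubgroup_iff]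
    intro x hx
    have hx' : (h * g)⁻¹ x ∈ C :=
      Subgroup.characteristic_iff_map_le.mp inferInstance (h * g)⁻¹
        (Subgroup.mem_map_of_mem _ hx)
    have := apply_apply_comm_of_mem g h hx'
    rw [← mul_apply _ h g, apply_inv_self] at this
    simpa [commutatorElement_def, mul_assoc] using this
  exact (mem_fixingSubgroup_iff _).mp (hle hf) c hc

end MulAut

/-- Let `p` be an odd prime and `P` a finite `p`-group with a characteristic
cyclic subgroup `C` such that `C_P(C) ≤ C`.  Then `Aut(P)` has a normal Sylow
`p`-subgroup. -/
theorem aut_has_normal_sylow {p : ℕ} (hp : p.Prime) (hodd : Odd p)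
    {P : Type*} [Group P] [Finite P] (hP : IsPGroup p P)
    (C : Subgroup P) (hchar : C.Characteristic) (hcyc : IsCyclic C)
    (hcent : Subgroup.centralizer (C : Set P) ≤ C) :
    ∃ Q : Sylow p (MulAut P), (Q : Subgroup (MulAut P)).Normal := by
  have : Fact p.Prime := ⟨hp⟩
  obtain ⟨n, hn⟩ := (hP.to_subgroup C).exists_card_eq
  have hcomm : IsPGroup p (commutator (MulAut P)) := fun f => ⟨n, Subtype.ext <| by
    rw [← hn]
    exact MulAut.pow_card_eq_one_of_fixes hcent
      fun _ hc => MulAut.apply_eq_of_mem_commutator f.2 hc⟩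
  obtain ⟨Q, hQ⟩ := hcomm.exists_le_sylow
  exact ⟨Q, Subgroup.Normal.of_commutator_le _ hQ⟩
end

section
/- Let p be a prime and let P be a finite p-group. Then P possesses a characteristic subgroup C with the following properties: (i) C has nilpotency class at most 2 and C/Z(C) is elementary abelian; (ii) [P, C] ≤ Z(C); (iii) C_P(C) ≤ Z(C). -/
open scoped commutatorElement

namespace Subgroup

/-- The subgroup of central elements of `G` whose `n`-th power is trivial. -/
def centralTorsion (G : Type*) [Group G] (n : ℕ) : Subgroup G where
  carrier := {x | x ∈ center G ∧ x ^ n = 1}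
  one_mem' := ⟨one_mem _, one_pow n⟩
  mul_mem' {x y} hx hy := by
    refine ⟨mul_mem hx.1 hy.1, ?_⟩
    rw [Commute.mul_pow (mem_center_iff.mp hy.1 x), hx.2, hy.2, one_mul]
  inv_mem' {x} hx := ⟨inv_mem hx.1, by rw [inv_pow, hx.2, inv_one]⟩

theorem mem_centralTorsion {G : Type*} [Group G] {n : ℕ} {x : G} :
    x ∈ centralTorsion G n ↔ x ∈ center G ∧ x ^ n = 1 :=
  Iff.rfl

instance centralTorsion_characteristic (G : Type*) [Group G] (n : ℕ) :
    (centralTorsion G n).Characteristic := by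
  refine characteristic_iff_le_comap.mpr fun ϕ x hx => ⟨?_, ?_⟩
  · exact characteristic_iff_le_comap.mp centerCharacteristic ϕ hx.1
  · rw [← map_pow, hx.2, map_one]

theorem mk_mem_centralTorsion_iff {G : Type*} [Group G] {N : Subgroup G} [N.Normal] {n : ℕ}
    {x : G} : (x : G ⧸ N) ∈ centralTorsion (G ⧸ N) n ↔ (∀ g : G, ⁅g, x⁆ ∈ N) ∧ x ^ n ∈ N := by
  rw [mem_centralTorsion, mem_center_iff, ← QuotientGroup.mk_pow, QuotientGroup.eq_one_iff,
    QuotientGroup.forall_mk]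
  refine and_congr_left fun _ => forall_congr' fun g => ?_
  rw [← QuotientGroup.eq_one_iff, ← commutatorElement_eq_one_iff_mul_comm]
  rfl

end Subgroup

/-- A nontrivial normal subgroup of a finite `p`-group contains a central element of order `p`. -/
theorem IsPGroup.exists_mem_normal_mem_center_orderOf_eq {p : ℕ} [Fact p.Prime]
    {G : Type*} [Group G] [Finite G] (hG : IsPGroup p G) {N : Subgroup G} [N.Normal]
    (hN : N ≠ ⊥) : ∃ x ∈ N, x ∈ Subgroup.center G ∧ orderOf x = p := by
  have : Nontrivial N := (Subgroup.nontrivial_iff_ne_bot N).mpr hN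
  have dvd {H : Subgroup G} [Nontrivial H] : p ∣ Nat.card H := by
    obtain ⟨n, hn, hcard⟩ := (hG.to_subgroup H).nontrivial_iff_card.mp inferInstance
    exact hcard ▸ dvd_pow_self p hn.ne'
  obtain ⟨z, hz, hz1⟩ :=
    (hG.of_equiv ConjAct.toConjAct).exists_fixed_point_of_prime_dvd_card_of_fixed_point N
      dvd (a := 1) fun g => smul_one g
  have hzc : (z : G) ∈ Subgroup.center G := by
    rw [← SetLike.mem_coe, ← ConjAct.fixedPoints_eq_center]
    exact fun g => congrArg Subtype.val (hz g)
  have : Nontrivial (N ⊓ Subgroup.center G : Subgroup G) :=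
    (Subgroup.nontrivial_iff_exists_ne_one _).mpr
      ⟨z, ⟨z.2, hzc⟩, fun h => hz1 (Subtype.ext h.symm)⟩
  obtain ⟨x, hx⟩ := exists_prime_orderOf_dvd_card' (G := (N ⊓ Subgroup.center G : Subgroup G))
    p dvd
  exact ⟨x, x.2.1, x.2.2, (Subgroup.orderOf_coe x).trans hx⟩

/-- Among the characteristic subgroups `C` with `[G, C] ≤ Z(C)` and `C / Z(C)` of exponent
dividing `p`, any maximal one contains its centralizer. -/
theorem IsPGroup.centralizer_le_of_maximal {p : ℕ} [Fact p.Prime] {G : Type*} [Group G] [Finite G]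
    (hG : IsPGroup p G) {C : Subgroup G}
    (hC : Maximal (fun C : Subgroup G => C.Characteristic ∧ ∀ x ∈ C,
      (∀ g : G, ⁅g, x⁆ ∈ C ⊓ Subgroup.centralizer (C : Set G)) ∧
        x ^ p ∈ C ⊓ Subgroup.centralizer (C : Set G)) C) :
    Subgroup.centralizer (C : Set G) ≤ C := by
  obtain ⟨hchar, hmem⟩ := hC.prop
  set K := Subgroup.centralizer (C : Set G)
  set Z := C ⊓ K
  set T := (Subgroup.centralTorsion (G ⧸ Z) p).comap (QuotientGroup.mk' Z)
  have hT_mem (x : G) : x ∈ T ↔ (∀ g : G, ⁅g, x⁆ ∈ Z) ∧ x ^ p ∈ Z :=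
    Subgroup.mk_mem_centralTorsion_iff
  have : T.Characteristic :=
    Subgroup.Characteristic.comap_quotient_mk (Subgroup.centralTorsion_characteristic _ p)
  have hsupT : C ⊔ K ⊓ T ≤ T := sup_le (fun x hx => (hT_mem x).mpr (hmem x hx)) inf_le_right
  have hZle : Z ≤ (C ⊔ K ⊓ T) ⊓ Subgroup.centralizer ((C ⊔ K ⊓ T : Subgroup G) : Set G) := by
    refine le_inf (inf_le_left.trans le_sup_left) (Subgroup.le_centralizer_iff.mpr (sup_le ?_ ?_))
    · exact Subgroup.le_centralizer_iff.mp inf_le_right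
    · exact inf_le_left.trans (Subgroup.centralizer_le inf_le_left)
  have hKT : K ⊓ T ≤ C := le_sup_right.trans (hC.le_of_ge
    ⟨inferInstance, fun x hx =>
      have h := (hT_mem x).mp (hsupT hx)
      ⟨fun g => hZle (h.1 g), hZle h.2⟩⟩ le_sup_left)
  by_contra hKC
  have hne : K.map (QuotientGroup.mk' Z) ≠ ⊥ := by
    rw [Ne, Subgroup.map_eq_bot_iff, QuotientGroup.ker_mk']
    exact fun h => hKC (h.trans inf_le_left)
  have : (K.map (QuotientGroup.mk' Z)).Normal :=
    Subgroup.Normal.map inferInstance _ (QuotientGroup.mk'_surjective Z)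
  obtain ⟨_, ⟨x, hxK, rfl⟩, hxc, hxo⟩ :=
    (hG.to_quotient Z).exists_mem_normal_mem_center_orderOf_eq hne
  have hxT : x ∈ T := ⟨hxc, hxo ▸ pow_orderOf_eq_one _⟩
  have hx1 : QuotientGroup.mk' Z x = 1 := (QuotientGroup.eq_one_iff x).mpr ⟨hKT ⟨hxK, hxT⟩, hxK⟩
  rw [hx1, orderOf_one] at hxo
  exact (Fact.out : p.Prime).one_lt.ne hxo


/-- Critical subgroup theorem.  A finite `p`-group `P` has a characteristic
subgroup `C` with (i) `C` of class at most 2 and `C/Z(C)` elementary abelian,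
(ii) `[P, C] ≤ Z(C)`, (iii) `C_P(C) ≤ Z(C)`.  Here `Z(C)`, viewed inside `P`,
is `C ⊓ centralizer C`. -/
theorem exists_critical_subgroup {p : ℕ} (hp : p.Prime)
    {P : Type*} [Group P] [Finite P] (hP : IsPGroup p P) :
    ∃ C : Subgroup P, C.Characteristic ∧
      ⁅C, C⁆ ≤ C ⊓ Subgroup.centralizer (C : Set P) ∧
      (∀ x ∈ C, x ^ p ∈ C ⊓ Subgroup.centralizer (C : Set P)) ∧
      ⁅(⊤ : Subgroup P), C⁆ ≤ C ⊓ Subgroup.centralizer (C : Set P) ∧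
      Subgroup.centralizer (C : Set P) ≤ C ⊓ Subgroup.centralizer (C : Set P) := by
  have : Fact p.Prime := ⟨hp⟩
  obtain ⟨C, hC⟩ := (Set.toFinite {C : Subgroup P | C.Characteristic ∧ ∀ x ∈ C,
    (∀ g : P, ⁅g, x⁆ ∈ C ⊓ Subgroup.centralizer (C : Set P)) ∧
      x ^ p ∈ C ⊓ Subgroup.centralizer (C : Set P)}).exists_maximal
    ⟨⊥, inferInstance, by simp⟩
  have hcomm : ⁅(⊤ : Subgroup P), C⁆ ≤ C ⊓ Subgroup.centralizer (C : Set P) :=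
    Subgroup.commutator_le.mpr fun g _ x hx => (hC.prop.2 x hx).1 g
  exact ⟨C, hC.prop.1, (Subgroup.commutator_mono le_top le_rfl).trans hcomm,
    fun x hx => (hC.prop.2 x hx).2, hcomm, le_inf (hP.centralizer_le_of_maximal hC) le_rfl⟩
end

section
/- Let p be an odd prime and let P be a finite p-group. Then there exists a characteristic subgroup D of P of exponent p such that [D, P] ≤ Z(D) and such that every non-trivial automorphism of P of order coprime to p restricts to a non-trivial automorphism of D. -/
section CommutatorPowers

variable {G : Type*} [Group G] {x y c : G}

theorem pow_mul_eq_mul_pow_mul_pow (hxy : y * x = x * y * c) (hcy : Commute c y) (n : ℕ) :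
    y ^ n * x = x * y ^ n * c ^ n := by
  induction n with
  | zero => simp
  | succ n ih =>
    calc y ^ (n + 1) * x = y ^ n * (y * x) := by rw [pow_succ, mul_assoc]
      _ = (y ^ n * x) * (y * c) := by rw [hxy]; simp only [mul_assoc]
      _ = x * y ^ n * (c ^ n * y) * c := by rw [ih]; simp only [mul_assoc]
      _ = x * y ^ (n + 1) * c ^ (n + 1) := by
        rw [(hcy.pow_left n).eq, pow_succ, pow_succ]; simp only [mul_assoc]

theorem mul_pow_eq_mul_pow_mul_pow_choose (hxy : y * x = x * y * c) (hcx : Commute c x)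
    (hcy : Commute c y) (n : ℕ) : (x * y) ^ n = x ^ n * y ^ n * c ^ n.choose 2 := by
  induction n with
  | zero => simp
  | succ n ih =>
    have hc : Commute (c ^ n.choose 2) (x * y) := (hcx.mul_right hcy).pow_left _
    calc (x * y) ^ (n + 1) = x ^ n * y ^ n * (c ^ n.choose 2 * (x * y)) := by
          rw [pow_succ, ih, mul_assoc]
      _ = x ^ n * (y ^ n * x) * y * c ^ n.choose 2 := by rw [hc.eq]; simp only [mul_assoc]
      _ = x ^ n * x * y ^ n * (c ^ n * y) * c ^ n.choose 2 := by
          rw [pow_mul_eq_mul_pow_mul_pow hxy hcy]; simp only [mul_assoc]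
      _ = x ^ (n + 1) * y ^ (n + 1) * c ^ (n + 1).choose 2 := by
          rw [(hcy.pow_left n).eq, Nat.choose_succ_succ' n 1, Nat.choose_one_right, pow_add c,
            pow_succ x n, pow_succ y n]
          simp only [mul_assoc]

/-- If the commutator `c` of `x` and `y` commutes with both and `y ^ p` commutes with `x`, where
`p` is an odd prime, then `(x * y) ^ p = x ^ p * y ^ p`. -/
theorem mul_pow_prime_of_commute {p : ℕ} (hp : p.Prime) (hodd : Odd p)
    (hxy : y * x = x * y * c) (hcx : Commute c x) (hcy : Commute c y)
    (hyp : Commute (y ^ p) x) : (x * y) ^ p = x ^ p * y ^ p := by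
  have hcp : c ^ p = 1 := by
    have h := pow_mul_eq_mul_pow_mul_pow hxy hcy p
    rwa [hyp.eq, left_eq_mul] at h
  have h2 : 2 < p := hp.two_le.lt_of_ne fun h => by
    rw [← h] at hodd
    exact absurd hodd (by decide)
  obtain ⟨m, hm⟩ := hp.dvd_choose_self two_ne_zero h2
  rw [mul_pow_eq_mul_pow_mul_pow_choose hxy hcx hcy, hm, pow_mul, hcp, one_pow, mul_one]

end CommutatorPowers

section Critical

variable {G : Type*} [Group G]

/-- A nontrivial part of a characteristic subgroup `K` outside `C` can be chosen so that it becomes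
central modulo `C`. -/
theorem exists_characteristic_commutator_le [Finite G] [Group.IsNilpotent G] {C K : Subgroup G}
    (hK : K.Characteristic) (hKC : ¬ K ≤ C) :
    ∃ E : Subgroup G, E.Characteristic ∧ E ≤ K ∧ ¬ E ≤ C ∧ ⁅E, (⊤ : Subgroup G)⁆ ≤ C := by
  obtain ⟨E, ⟨hE, hEK, hEC⟩, hmin⟩ :=
    (Set.toFinite {E : Subgroup G | E.Characteristic ∧ E ≤ K ∧ ¬ E ≤ C}).exists_minimal
      ⟨K, hK, le_rfl, hKC⟩
  refine ⟨E, hE, hEK, hEC, ?_⟩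
  by_contra hcomm
  have hle : ⁅E, (⊤ : Subgroup G)⁆ ≤ E := Subgroup.commutator_le_left E ⊤
  have hge : E ≤ ⁅E, (⊤ : Subgroup G)⁆ :=
    hmin ⟨inferInstance, hle.trans hEK, hcomm⟩ hle
  have hlower : ∀ n, E ≤ (⊤ : Subgroup G).lowerCentralSeries n := by
    intro n
    induction n with
    | zero => simp
    | succ n ih => exact hge.trans (Subgroup.commutator_mono ih le_rfl)
  obtain ⟨n, hn⟩ := Subgroup.nilpotent_iff_lowerCentralSeries.1 ‹Group.IsNilpotent G›
  exact hEC ((hlower n).trans (hn ▸ bot_le))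

/-- Existence of Thompson's critical subgroup, without the condition on `C / Z(C)`. -/
theorem exists_characteristic_self_centralizing [Finite G] [Group.IsNilpotent G] :
    ∃ C : Subgroup G, C.Characteristic ∧
      ⁅C, (⊤ : Subgroup G)⁆ ≤ Subgroup.centralizer (C : Set G) ∧
      Subgroup.centralizer (C : Set G) ≤ C := by
  obtain ⟨C, ⟨hC, hcomm⟩, hmax⟩ :=
    (Set.toFinite {C : Subgroup G | C.Characteristic ∧
      ⁅C, (⊤ : Subgroup G)⁆ ≤ Subgroup.centralizer (C : Set G)}).exists_maximal
      ⟨⊥, inferInstance, by simp⟩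
  refine ⟨C, hC, hcomm, ?_⟩
  by_contra hcent
  obtain ⟨E, hE, hEK, hEC, hEcomm⟩ := exists_characteristic_commutator_le inferInstance hcent
  have hmemE : ⁅E, (⊤ : Subgroup G)⁆ ≤ C ⊓ Subgroup.centralizer (C : Set G) :=
    le_inf hEcomm ((Subgroup.commutator_le_left E ⊤).trans hEK)
  have hmemC : ⁅C, (⊤ : Subgroup G)⁆ ≤ C ⊓ Subgroup.centralizer (C : Set G) :=
    le_inf (Subgroup.commutator_le_left C ⊤) hcomm
  refine hEC (le_sup_right.trans (hmax (y := C ⊔ E) ⟨inferInstance, ?_⟩ le_sup_left))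
  have hcentral : C ⊓ Subgroup.centralizer (C : Set G) ≤
      Subgroup.centralizer ((C ⊔ E : Subgroup G) : Set G) := by
    rintro z ⟨hzC, hzK⟩
    refine Subgroup.mem_centralizer_iff.2 fun x hx => ?_
    obtain ⟨a, ha, e, he, rfl⟩ := Subgroup.mem_sup_of_normal_right.1 hx
    have hae : Commute a z := Subgroup.mem_centralizer_iff.1 hzK a ha
    have hez : Commute e z := (Subgroup.mem_centralizer_iff.1 (hEK he) z hzC).symm
    exact hae.mul_left hez
  refine le_trans ?_ hcentral
  rw [Subgroup.commutator_le]
  intro x hx g _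
  obtain ⟨a, ha, e, he, rfl⟩ := Subgroup.mem_sup_of_normal_right.1 hx
  rw [commutatorElement_mul_left_eq_conj_mul]
  have hnormal : (C ⊓ Subgroup.centralizer (C : Set G)).Normal := inferInstance
  exact mul_mem
    (hnormal.conj_mem _ (hmemE (Subgroup.commutator_mem_commutator he (Subgroup.mem_top g))) a)
    (hmemC (Subgroup.commutator_mem_commutator ha (Subgroup.mem_top g)))

end Critical

section CoprimeAutomorphism

variable {p : ℕ} {G : Type*} [Group G]

/-- An automorphism of order coprime to `p` of a `p`-group fixes `x` as soon as it fixes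
`x⁻¹ φ(x)`. -/
theorem IsPGroup.apply_eq_self_of_apply_inv_mul (hG : IsPGroup p G) {φ : MulAut G}
    (hφ : Nat.Coprime (orderOf φ) p) {x : G} (hx : φ (x⁻¹ * φ x) = x⁻¹ * φ x) : φ x = x := by
  set z := x⁻¹ * φ x with hz
  have hxz : φ x = x * z := by simp [hz]
  have hiter : ∀ n : ℕ, (φ ^ n) x = x * z ^ n := by
    intro n
    induction n with
    | zero => simp
    | succ n ih =>
      rw [pow_succ', MulAut.mul_apply, ih, map_mul, map_pow, hx, hxz, mul_assoc, pow_succ']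
  have hzn : z ^ orderOf φ = 1 := by
    have h := hiter (orderOf φ)
    rwa [pow_orderOf_eq_one, MulAut.one_apply, left_eq_mul] at h
  obtain ⟨k, hk⟩ := hG z
  have hz1 : z = 1 := by
    rw [← orderOf_eq_one_iff]
    exact Nat.eq_one_of_dvd_coprimes (hφ.pow_right k) (orderOf_dvd_of_pow_eq_one hzn)
      (orderOf_dvd_of_pow_eq_one hk)
  rw [hxz, hz1, mul_one]

/-- An automorphism of order coprime to `p` which is trivial on a normal self-centralizing subgroup
of a `p`-group is trivial. -/
theorem IsPGroup.eq_one_of_fixes_of_centralizer_le (hG : IsPGroup p G) {C : Subgroup G} [C.Normal]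
    (hC : Subgroup.centralizer (C : Set G) ≤ C) {φ : MulAut G}
    (hφ : Nat.Coprime (orderOf φ) p) (hfix : ∀ x ∈ C, φ x = x) : φ = 1 := by
  ext x
  refine hG.apply_eq_self_of_apply_inv_mul hφ (hfix _ (hC ?_))
  rw [Subgroup.mem_centralizer_iff]
  intro a ha
  have h := hfix _ (Subgroup.Normal.conj_mem ‹C.Normal› a ha x)
  rw [map_mul, map_mul, map_inv, hfix a ha] at h
  calc a * (x⁻¹ * φ x) = x⁻¹ * (x * a * x⁻¹) * φ x := by group
    _ = x⁻¹ * φ x * a := by rw [← h]; group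

end CoprimeAutomorphism

section ClassTwo

open scoped commutatorElement

variable {p : ℕ} {G : Type*} [Group G] {C : Subgroup G}

theorem mul_pow_prime_of_mem (hp : p.Prime) (hodd : Odd p)
    (hC : ⁅C, C⁆ ≤ Subgroup.centralizer (C : Set G)) {x y : G} (hx : x ∈ C) (hy : y ∈ C)
    (hyp : Commute (y ^ p) x) : (x * y) ^ p = x ^ p * y ^ p := by
  have hc : ⁅y⁻¹, x⁻¹⁆ ∈ Subgroup.centralizer (C : Set G) :=
    hC (Subgroup.commutator_mem_commutator (inv_mem hy) (inv_mem hx))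
  rw [Subgroup.mem_centralizer_iff] at hc
  refine mul_pow_prime_of_commute hp hodd (c := ⁅y⁻¹, x⁻¹⁆) ?_ (hc x hx).symm (hc y hy).symm hyp
  simp [commutatorElement_def, mul_assoc]

/-- The elements of order dividing an odd prime `p` in a subgroup of class at most two. -/
def Subgroup.omegaOfClassTwo (hp : p.Prime) (hodd : Odd p)
    (hC : ⁅C, C⁆ ≤ Subgroup.centralizer (C : Set G)) : Subgroup G where
  carrier := {x | x ∈ C ∧ x ^ p = 1}
  one_mem' := ⟨one_mem C, one_pow p⟩
  mul_mem' := by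
    rintro x y ⟨hx, hxp⟩ ⟨hy, hyp⟩
    refine ⟨mul_mem hx hy, ?_⟩
    rw [mul_pow_prime_of_mem hp hodd hC hx hy (by simp [hyp]), hxp, hyp, one_mul]
  inv_mem' := by
    rintro x ⟨hx, hxp⟩
    exact ⟨inv_mem hx, by rw [inv_pow, hxp, inv_one]⟩

/-- For odd `p`, an automorphism of order coprime to `p` fixing the elements of order `p` of an
invariant subgroup of class at most two fixes that subgroup. -/
theorem IsPGroup.apply_eq_self_of_fixes_pow_eq_one (hp : p.Prime) (hodd : Odd p)
    (hG : IsPGroup p G) (hC : ⁅C, C⁆ ≤ Subgroup.centralizer (C : Set G)) {φ : MulAut G}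
    (hφ : Nat.Coprime (orderOf φ) p) (hinv : ∀ x ∈ C, φ x ∈ C)
    (hfix : ∀ x ∈ C, x ^ p = 1 → φ x = x) {x : G} (hx : x ∈ C) : φ x = x := by
  obtain ⟨k, hk⟩ := hG x
  induction k generalizing x with
  | zero => simp_all
  | succ k ih =>
    have hpow : φ x ^ p = x ^ p := by
      rw [← map_pow]
      exact ih (pow_mem hx p) (by rw [← pow_mul, ← pow_succ', hk])
    have hz : (x⁻¹ * φ x) ^ p = 1 := by
      rw [mul_pow_prime_of_mem hp hodd hC (inv_mem hx) (hinv x hx), hpow, inv_pow, inv_mul_cancel]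
      rw [hpow]
      exact ((Commute.refl x).pow_left p).inv_right
    exact hG.apply_eq_self_of_apply_inv_mul hφ (hfix _ (mul_mem (inv_mem hx) (hinv x hx)) hz)

end ClassTwo

/-- Let `p` be an odd prime and `P` a finite `p`-group.  There is a
characteristic subgroup `D` of `P` of exponent `p` with `[D, P] ≤ Z(D)` such
that every non-trivial automorphism of `P` of order coprime to `p` restricts to
a non-trivial automorphism of `D` (i.e. moves some element of `D`). -/
theorem exists_special_characteristic_subgroup {p : ℕ} (hp : p.Prime) (hodd : Odd p)
    {P : Type*} [Group P] [Finite P] (hP : IsPGroup p P) :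
    ∃ D : Subgroup P, D.Characteristic ∧ (∀ x ∈ D, x ^ p = 1) ∧
      ⁅D, (⊤ : Subgroup P)⁆ ≤ D ⊓ Subgroup.centralizer (D : Set P) ∧
      ∀ φ : MulAut P, φ ≠ 1 → Nat.Coprime (orderOf φ) p → ∃ x ∈ D, φ x ≠ x := by
  have : Fact p.Prime := ⟨hp⟩
  have : Group.IsNilpotent P := hP.isNilpotent
  obtain ⟨C, hC, hcomm, hcent⟩ := exists_characteristic_self_centralizing (G := P)
  have hC2 : ⁅C, C⁆ ≤ Subgroup.centralizer (C : Set P) :=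
    (Subgroup.commutator_mono le_rfl le_top).trans hcomm
  have hinv : ∀ (φ : MulAut P), ∀ x ∈ C, φ x ∈ C := fun φ x hx =>
    Subgroup.characteristic_iff_le_comap.1 hC φ hx
  have hDC : Subgroup.omegaOfClassTwo hp hodd hC2 ≤ C := fun x hx => hx.1
  have hD : (Subgroup.omegaOfClassTwo hp hodd hC2).Characteristic := by
    refine Subgroup.characteristic_iff_le_comap.2 fun φ x hx => ⟨hinv φ x hx.1, ?_⟩
    change φ x ^ p = 1
    rw [← map_pow, hx.2, map_one]
  refine ⟨Subgroup.omegaOfClassTwo hp hodd hC2, hD, fun x hx => hx.2,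
    le_inf (Subgroup.commutator_le_left _ ⊤) ?_, ?_⟩
  · exact (Subgroup.commutator_mono hDC le_rfl).trans
      (hcomm.trans (Subgroup.centralizer_le hDC))
  · intro φ hne hφ
    by_contra! hfix
    exact hne (hP.eq_one_of_fixes_of_centralizer_le hcent hφ fun x hx =>
      hP.apply_eq_self_of_fixes_pow_eq_one hp hodd hC2 hφ (hinv φ)
        (fun y hy hyp => hfix y ⟨hy, hyp⟩) hx)
end

section
/- Let p be an odd prime and let P be a finite p-group. Let D be a characteristic subgroup of P of exponent p such that [D, P] ≤ Z(D) and such that every non-trivial automorphism of P of order coprime to p restricts to a non-trivial automorphism of D. Then for any subgroup A of D that is maximal with respect to inclusion among abelian subgroups of D, we have: A is normal in P, and the subgroup C_{Aut(P)}(A) of all automorphisms of P that fix A elementwise is a p-group. -/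
/-- A maximal abelian subgroup `A` of `D` contains its centralizer in `D`. -/
theorem Subgroup.mem_of_maximal_abelian_of_commute {G : Type*} [Group G] {D A : Subgroup G}
    (hAD : A ≤ D) (hab : ∀ a ∈ A, ∀ b ∈ A, a * b = b * a)
    (hmax : ∀ B : Subgroup G, B ≤ D → (∀ a ∈ B, ∀ b ∈ B, a * b = b * a) → A ≤ B → B = A)
    {d : G} (hd : d ∈ D) (hcomm : ∀ a ∈ A, d * a = a * d) : d ∈ A := by
  have hgen : ∀ x ∈ insert d (A : Set G), ∀ y ∈ insert d (A : Set G), x * y = y * x := by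
    rintro x (rfl | hx) y (rfl | hy)
    · rfl
    · exact hcomm y hy
    · exact (hcomm x hx).symm
    · exact hab x hx y hy
  have hclosure : Subgroup.closure (insert d (A : Set G)) = A := by
    refine hmax _ ((Subgroup.closure_le D).2 (Set.insert_subset hd hAD)) (fun a ha b hb => ?_)
      fun a ha => Subgroup.subset_closure (Set.mem_insert_of_mem d ha)
    have := Subgroup.isMulCommutative_closure hgen
    exact setLike_mul_comm ha hb
  exact hclosure ▸ Subgroup.subset_closure (Set.mem_insert d (A : Set G))

/-- An automorphism with `φ x = x * a` and `φ a = a` satisfies `φ ^ n : x ↦ x * a ^ n`. -/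
theorem MulAut.pow_apply_eq_mul_pow {G : Type*} [Group G] {φ : MulAut G} {x a : G}
    (hx : φ x = x * a) (ha : φ a = a) (n : ℕ) : (φ ^ n) x = x * a ^ n := by
  induction n with
  | zero => simp
  | succ n ih =>
    rw [pow_succ', MulAut.mul_apply, ih, map_mul, map_pow, hx, ha, pow_succ', mul_assoc]

/-- Let `p` be an odd prime, `P` a finite `p`-group and `D` a characteristic
subgroup of exponent `p` with `[D, P] ≤ Z(D)` on which every non-trivial
`p'`-automorphism of `P` acts non-trivially.  Then every maximal abelian
subgroup `A` of `D` is normal in `P`, and `C_{Aut(P)}(A)` is a `p`-group. -/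
theorem maximal_abelian_normal_and_centralizer_pGroup {p : ℕ} (hp : p.Prime) (hodd : Odd p)
    {P : Type*} [Group P] [Finite P] (hP : IsPGroup p P)
    (D : Subgroup P) (hchar : D.Characteristic)
    (hexp : ∀ x ∈ D, x ^ p = 1)
    (hDP : ⁅D, (⊤ : Subgroup P)⁆ ≤ D ⊓ Subgroup.centralizer (D : Set P))
    (hfaithful : ∀ φ : MulAut P, φ ≠ 1 → Nat.Coprime (orderOf φ) p → ∃ x ∈ D, φ x ≠ x)
    (A : Subgroup P) (hAD : A ≤ D)
    (hab : ∀ a ∈ A, ∀ b ∈ A, a * b = b * a)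
    (hmax : ∀ B : Subgroup P, B ≤ D → (∀ a ∈ B, ∀ b ∈ B, a * b = b * a) → A ≤ B → B = A)
    (K : Subgroup (MulAut P)) (hK : ∀ φ : MulAut P, φ ∈ K ↔ ∀ a ∈ A, φ a = a) :
    A.Normal ∧ IsPGroup p K := by
  have hself : ∀ d ∈ D, (∀ a ∈ A, d * a = a * d) → d ∈ A := fun d hd hcomm =>
    Subgroup.mem_of_maximal_abelian_of_commute hAD hab hmax hd hcomm
  have hDPA : ⁅D, (⊤ : Subgroup P)⁆ ≤ A := fun z hz =>
    hself z (hDP hz).1 fun a ha => (Subgroup.mem_centralizer_iff.1 (hDP hz).2 a (hAD ha)).symm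
  have hnormal : A.Normal := by
    refine ⟨fun a ha g => ?_⟩
    have hcomm : a * g * a⁻¹ * g⁻¹ ∈ A :=
      hDPA (Subgroup.commutator_mem_commutator (hAD ha) (Subgroup.mem_top g))
    have hconj : g * a * g⁻¹ = (a * g * a⁻¹ * g⁻¹)⁻¹ * a := by group
    exact hconj ▸ A.mul_mem (A.inv_mem hcomm) ha
  have htrivial : ∀ ψ ∈ K, Nat.Coprime (orderOf ψ) p → ψ = 1 := by
    intro ψ hψ hcop
    by_contra hne
    obtain ⟨x, hxD, hx⟩ := hfaithful ψ hne hcop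
    have hfix := (hK ψ).1 hψ
    have hψxD : ψ x ∈ D := Subgroup.characteristic_iff_le_comap.1 hchar ψ hxD
    have hmem : x⁻¹ * ψ x ∈ A := by
      refine hself _ (D.mul_mem (D.inv_mem hxD) hψxD) fun a ha => ?_
      have hconj : ψ x * a * (ψ x)⁻¹ = x * a * x⁻¹ := by
        simpa [hfix a ha] using hfix _ (hnormal.conj_mem a ha x)
      have hmul : ψ x * a = x * a * x⁻¹ * ψ x := by rw [← hconj]; group
      rw [mul_assoc, hmul]
      group
    have hpow := MulAut.pow_apply_eq_mul_pow (mul_inv_cancel_left x (ψ x)).symm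
      (hfix _ hmem) (orderOf ψ)
    have hone : (x⁻¹ * ψ x) ^ orderOf ψ = 1 := by simpa [pow_orderOf_eq_one] using hpow
    have heq : x⁻¹ * ψ x = 1 := by
      rw [← orderOf_eq_one_iff]
      exact Nat.eq_one_of_dvd_coprimes hcop (orderOf_dvd_of_pow_eq_one hone)
        (orderOf_dvd_of_pow_eq_one (hexp _ (hAD hmem)))
    exact hx (inv_mul_eq_one.1 heq).symm
  refine ⟨hnormal, fun ⟨φ, hφ⟩ => ?_⟩
  obtain ⟨k, m, hm, hkm⟩ := Nat.exists_eq_pow_mul_and_not_dvd (orderOf_pos φ).ne' p hp.ne_one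
  refine ⟨k, Subtype.ext (htrivial (φ ^ p ^ k) (K.pow_mem hφ _) ?_)⟩
  rw [orderOf_pow_of_dvd (pow_ne_zero k hp.ne_zero) (hkm ▸ dvd_mul_right _ _), hkm,
    Nat.mul_div_cancel_left _ (pow_pos hp.pos k)]
  exact ((Nat.Prime.coprime_iff_not_dvd hp).2 hm).symm
end
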